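/- arXiv:1505.06936 — 2 statements merged into one kernel-verified Lean document; each statement's English description precedes it below -/
import Mathlib

section
/- Let F be a Finsler function on ℝⁿ that satisfies the Hamel equations in the standard coordinates. Then a C² curve γ : I → ℝⁿ with nowhere vanishing velocity satisfies the Euler–Lagrange equations for F (for every i and t, (d/dt)[∂F/∂y^i(γ(t),γ'(t))] = ∂F/∂x^i(γ(t),γ'(t))) if and only if for every index i and every t ∈ I one has ∑_k ∂²F/∂y^k∂y^i(γ(t),γ'(t))·(γ^k)''(t) = 0. -/
open scoped BigOperators Topology
noncomputable section

abbrev E (n : ℕ) := Fin n → ℝ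

/-- Partial derivative with respect to the base coordinate `x^i`. -/
def pdx {n : ℕ} (i : Fin n) (f : E n × E n → ℝ) (p : E n × E n) : ℝ :=
  fderiv ℝ f p (Pi.single i 1, 0)

/-- Partial derivative with respect to the fibre coordinate `y^i`. -/
def pdy {n : ℕ} (i : Fin n) (f : E n × E n → ℝ) (p : E n × E n) : ℝ :=
  fderiv ℝ f p (0, Pi.single i 1)

/-- A Finsler function on `ℝⁿ`. -/
structure IsFinsler {n : ℕ} (F : E n × E n → ℝ) : Prop where
  smooth : ContDiffOn ℝ (⊤ : ℕ∞) F {p : E n × E n | p.2 ≠ 0}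
  homog : ∀ (x y : E n) (c : ℝ), 0 < c → F (x, c • y) = c * F (x, y)
  pos : ∀ (x y : E n), y ≠ 0 → 0 < F (x, y)
  posDef : ∀ (x y : E n), y ≠ 0 →
    (Matrix.of fun i j : Fin n =>
      (1 / 2) * pdy i (pdy j (fun p => F p ^ 2)) (x, y)).PosDef

/-- A geodesic of `(ℝⁿ, F)`: a `C²` curve on a nontrivial open interval, with nowhere
vanishing velocity, positive constant speed, satisfying the Euler–Lagrange equations. -/
structure IsGeodesic {n : ℕ} (F : E n × E n → ℝ) (γ : ℝ → E n) (t₁ t₂ : ℝ) : Prop where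
  lt : t₁ < t₂
  smooth : ContDiffOn ℝ 2 γ (Set.Ioo t₁ t₂)
  vel : ∀ t ∈ Set.Ioo t₁ t₂, deriv γ t ≠ 0
  constSpeed : ∃ c : ℝ, 0 < c ∧ ∀ t ∈ Set.Ioo t₁ t₂, F (γ t, deriv γ t) = c
  eulerLagrange : ∀ (i : Fin n), ∀ t ∈ Set.Ioo t₁ t₂,
    deriv (fun s => pdy i F (γ s, deriv γ s)) t = pdx i F (γ t, deriv γ t)

/-- The Hamel equations in the standard coordinates. -/
def SatisfiesHamel {n : ℕ} (F : E n × E n → ℝ) : Prop :=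
  ∀ (x y : E n), y ≠ 0 → ∀ i : Fin n,
    ∑ k, pdx k (pdy i F) (x, y) * y k = ∑ k, pdx i (pdy k F) (x, y) * y k

/-- `(ℝⁿ, F)` is rectilinear in the standard coordinates. -/
def Rectilinear {n : ℕ} (F : E n × E n → ℝ) : Prop :=
  ∀ (γ : ℝ → E n) (t₁ t₂ : ℝ), IsGeodesic F γ t₁ t₂ →
    ∃ (f : ℝ → ℝ) (a b : E n), a ≠ 0 ∧
      ContDiffOn ℝ 2 f (Set.Ioo t₁ t₂) ∧
      (∀ t ∈ Set.Ioo t₁ t₂, 0 < deriv f t) ∧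
      ∀ t ∈ Set.Ioo t₁ t₂, γ t = f t • a + b

lemma aux_isOpen {n : ℕ} : IsOpen {p : E n × E n | p.2 ≠ 0} :=
  isOpen_ne.preimage continuous_snd

lemma aux_diff {n : ℕ} {F : E n × E n → ℝ} (hF : IsFinsler F) {p : E n × E n}
    (hp : p.2 ≠ 0) : DifferentiableAt ℝ F p :=
  (hF.smooth.contDiffAt (aux_isOpen.mem_nhds hp)).differentiableAt (by simp)

lemma aux_diff_pdy {n : ℕ} {F : E n × E n → ℝ} (hF : IsFinsler F) (i : Fin n)
    {p : E n × E n} (hp : p.2 ≠ 0) : DifferentiableAt ℝ (pdy i F) p := by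
  have h := hF.smooth.contDiffAt (aux_isOpen.mem_nhds hp)
  have h1 : ContDiffAt ℝ 1 (fderiv ℝ F) p :=
    h.fderiv_right (m := 1) (by
      have h2 : ((2 : ℕ∞) : WithTop ℕ∞) ≤ ((⊤ : ℕ∞) : WithTop ℕ∞) := WithTop.coe_le_coe.2 le_top
      rw [one_add_one_eq_two]
      exact h2)
  have h2 : DifferentiableAt ℝ (fderiv ℝ F) p := h1.differentiableAt (by simp)
  exact h2.clm_apply (differentiableAt_const _)

lemma aux_sum_snd {n : ℕ} (L : E n × E n →L[ℝ] ℝ) (v : E n) :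
    L (0, v) = ∑ k, L (0, Pi.single k 1) * v k := by
  have := (L.comp (ContinuousLinearMap.inr ℝ (E n) (E n))).toLinearMap.pi_apply_eq_sum_univ v
  simp only [ContinuousLinearMap.coe_coe, ContinuousLinearMap.comp_apply,
    ContinuousLinearMap.inr_apply, smul_eq_mul] at this
  rw [this]
  refine Finset.sum_congr rfl fun k _ => ?_
  rw [mul_comm]
  congr 3
  ext j
  simp [Pi.single_apply, eq_comm]

lemma aux_sum_fst {n : ℕ} (L : E n × E n →L[ℝ] ℝ) (v : E n) :
    L (v, 0) = ∑ k, L (Pi.single k 1, 0) * v k := by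
  have := (L.comp (ContinuousLinearMap.inl ℝ (E n) (E n))).toLinearMap.pi_apply_eq_sum_univ v
  simp only [ContinuousLinearMap.coe_coe, ContinuousLinearMap.comp_apply,
    ContinuousLinearMap.inl_apply, smul_eq_mul] at this
  rw [this]
  refine Finset.sum_congr rfl fun k _ => ?_
  rw [mul_comm]
  congr 3
  ext j
  simp [Pi.single_apply, eq_comm]

/-- Euler's identity for the homogeneous function `F`. -/
lemma aux_euler {n : ℕ} {F : E n × E n → ℝ} (hF : IsFinsler F) {p : E n × E n}
    (hp : p.2 ≠ 0) : ∑ k, pdy k F p * p.2 k = F p := by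
  have h0 : ∑ k, pdy k F p * p.2 k = fderiv ℝ F p (0, p.2) := (aux_sum_snd _ _).symm
  rw [h0]
  have hc : HasDerivAt (fun c : ℝ => ((p.1, c • p.2) : E n × E n)) (0, p.2) 1 := by
    have := (hasDerivAt_id (1 : ℝ)).smul_const p.2
    simp only [one_smul] at this
    exact (hasDerivAt_const (1 : ℝ) p.1).prodMk this
  have h1 : HasDerivAt (fun c : ℝ => F (p.1, c • p.2)) (fderiv ℝ F p (0, p.2)) 1 := by
    refine HasFDerivAt.comp_hasDerivAt (l := F) (1 : ℝ) ?_ hc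
    simpa using (aux_diff hF hp).hasFDerivAt
  have h2 : HasDerivAt (fun c : ℝ => F (p.1, c • p.2)) (F p) 1 := by
    have h3 : HasDerivAt (fun c : ℝ => c * F p) (F p) 1 := by
      simpa using (hasDerivAt_id (1 : ℝ)).mul_const (F p)
    refine h3.congr_of_eventuallyEq ?_
    filter_upwards [lt_mem_nhds (zero_lt_one : (0 : ℝ) < 1)] with c hc
    exact hF.homog p.1 p.2 c hc
  exact h1.unique h2

/-- The base derivative of Euler's identity. -/
lemma aux_euler_pdx {n : ℕ} {F : E n × E n → ℝ} (hF : IsFinsler F) (i : Fin n)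
    {p : E n × E n} (hp : p.2 ≠ 0) : ∑ k, pdx i (pdy k F) p * p.2 k = pdx i F p := by
  have h1 : HasFDerivAt (fun q : E n × E n => ∑ k, pdy k F q * q.2 k) (fderiv ℝ F p) p := by
    refine (aux_diff hF hp).hasFDerivAt.congr_of_eventuallyEq ?_
    filter_upwards [aux_isOpen.mem_nhds hp] with q hq
    exact aux_euler hF hq
  have h2 := HasFDerivAt.fun_sum (u := Finset.univ) fun (k : Fin n) _ =>
    (aux_diff_pdy hF k hp).hasFDerivAt.mul
      (((ContinuousLinearMap.proj (R := ℝ) (φ := fun _ : Fin n => ℝ) k).comp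
        (ContinuousLinearMap.snd ℝ (E n) (E n))).hasFDerivAt (x := p))
  have h3 := congrArg (fun L => L ((Pi.single i 1, 0) : E n × E n)) (h1.unique h2)
  simp only [pdx]
  rw [h3]
  simp [mul_comm]

/-- If `F` satisfies the Hamel equations, then a `C²` curve with nowhere
vanishing velocity satisfies the Euler–Lagrange equations iff
`∑_k ∂²F/∂y^k∂y^i(γ,γ')·(γ^k)'' = 0`. -/
theorem statement1 {n : ℕ} (F : E n × E n → ℝ) (hF : IsFinsler F)
    (hHam : SatisfiesHamel F) (γ : ℝ → E n) (t₁ t₂ : ℝ) (hlt : t₁ < t₂)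
    (hγ : ContDiffOn ℝ 2 γ (Set.Ioo t₁ t₂))
    (hvel : ∀ t ∈ Set.Ioo t₁ t₂, deriv γ t ≠ 0) :
    (∀ (i : Fin n), ∀ t ∈ Set.Ioo t₁ t₂,
        deriv (fun s => pdy i F (γ s, deriv γ s)) t = pdx i F (γ t, deriv γ t)) ↔
    (∀ (i : Fin n), ∀ t ∈ Set.Ioo t₁ t₂,
        ∑ k, pdy k (pdy i F) (γ t, deriv γ t) * deriv (fun s => deriv γ s k) t = 0) := by
  have key : ∀ (i : Fin n), ∀ t ∈ Set.Ioo t₁ t₂,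
      deriv (fun s => pdy i F (γ s, deriv γ s)) t = pdx i F (γ t, deriv γ t) +
        ∑ k, pdy k (pdy i F) (γ t, deriv γ t) * deriv (fun s => deriv γ s k) t := by
    intro i t ht
    have hv := hvel t ht
    have hc : ContDiffAt ℝ 2 γ t := hγ.contDiffAt (isOpen_Ioo.mem_nhds ht)
    have hd1 : HasDerivAt γ (deriv γ t) t := (hc.differentiableAt (by simp)).hasDerivAt
    have hc' : ContDiffOn ℝ 1 (deriv γ) (Set.Ioo t₁ t₂) :=
      ((contDiffOn_succ_iff_deriv_of_isOpen (n := 1) isOpen_Ioo).1 (by rw [one_add_one_eq_two]; exact hγ)).2.2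
    have hd2 : HasDerivAt (deriv γ) (deriv (deriv γ) t) t :=
      ((hc'.contDiffAt (isOpen_Ioo.mem_nhds ht)).differentiableAt (by simp)).hasDerivAt
    have hk : ∀ k, deriv (fun s => deriv γ s k) t = deriv (deriv γ) t k := fun k =>
      (hasDerivAt_pi.1 hd2 k).deriv
    have hcomp : HasDerivAt (fun s => pdy i F (γ s, deriv γ s))
        (fderiv ℝ (pdy i F) (γ t, deriv γ t) (deriv γ t, deriv (deriv γ) t)) t :=
      HasFDerivAt.comp_hasDerivAt (l := pdy i F) t
        (aux_diff_pdy hF i (p := (γ t, deriv γ t)) hv).hasFDerivAt (hd1.prodMk hd2)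
    have hsplit : ((deriv γ t, deriv (deriv γ) t) : E n × E n)
        = (deriv γ t, 0) + (0, deriv (deriv γ) t) := by simp
    rw [hcomp.deriv, hsplit, map_add, aux_sum_fst, aux_sum_snd]
    simp only [hk]
    have h1 := hHam (γ t) (deriv γ t) hv i
    have h2 := aux_euler_pdx hF i (p := (γ t, deriv γ t)) hv
    rw [← h2, ← h1]
    rfl
  constructor
  · intro h i t ht
    have := key i t ht
    rw [h i t ht] at this
    linarith
  · intro h i t ht
    rw [key i t ht, h i t ht, add_zero]
end
end

section
/- Let F : ℝⁿ × ℝⁿ → ℝ be smooth on ℝⁿ × (ℝⁿ ∖ {0}) and positively 1-homogeneous in its second argument, let φ : ℝⁿ → ℝⁿ be a smooth diffeomorphism onto an open subset of ℝⁿ, and let F̄ be the expression of F in the φ-coordinates. Then for every x, every y ≠ 0 and every index i the following identity holds: ∑_s ∂²F/∂x^s∂y^i(x,y)·y^s − ∑_s ∂²F/∂x^i∂y^s(x,y)·y^s = ∑_{s,l,m} [∂²F̄/∂x̄^m∂ȳ^l − ∂²F̄/∂x̄^l∂ȳ^m](φ(x), Dφ(x)·y) · (∂φ^m/∂x^s)(x)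 · (∂φ^l/∂x^i)(x) · y^s + ∑_{s,k,l,r} ∂²F̄/∂ȳ^r∂ȳ^l(φ(x), Dφ(x)·y) · [ (∂²φ^l/∂x^s∂x^k)(x)·(∂φ^r/∂x^i)(x) − (∂²φ^l/∂x^i∂x^k)(x)·(∂φ^r/∂x^s)(x) ] · y^s·y^k. -/
open scoped BigOperators Topology
noncomputable section

/-- `∂φ^m/∂x^s` : entry `m` of the Jacobian of `φ` applied to the `s`-th basis vector. -/
def Dphi {n : ℕ} (φ : E n → E n) (x : E n) (s m : Fin n) : ℝ :=
  fderiv ℝ φ x (Pi.single s 1) m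

/-- `∂²φ^l/∂x^s∂x^k`. -/
def D2phi {n : ℕ} (φ : E n → E n) (x : E n) (s k l : Fin n) : ℝ :=
  fderiv ℝ (fun x' => fderiv ℝ φ x' (Pi.single k 1) l) x (Pi.single s 1)

lemma two_le_smooth : (2 : WithTop ℕ∞) ≤ ((⊤ : ℕ∞) : WithTop ℕ∞) := by
  have h : ((2 : ℕ∞) : WithTop ℕ∞) ≤ ((⊤ : ℕ∞) : WithTop ℕ∞) := WithTop.coe_le_coe.2 le_top
  exact h

lemma one_add_one_le_smooth : (1 + 1 : WithTop ℕ∞) ≤ ((⊤ : ℕ∞) : WithTop ℕ∞) := by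
  rw [one_add_one_eq_two]
  exact two_le_smooth

lemma fderiv_decomp {n : ℕ} (G : E n × E n → ℝ) (p : E n × E n) (a b : E n) :
    fderiv ℝ G p (a, b) = ∑ m, pdx m G p * a m + ∑ r, pdy r G p * b r := by
  have h1 : ((a, b) : E n × E n) = ∑ m, a m • ((Pi.single m 1, 0) : E n × E n)
      + ∑ r, b r • ((0, Pi.single r 1) : E n × E n) := by
    have ha : ∀ a : E n, a = ∑ m, a m • (Pi.single m 1 : E n) := fun a =>
      pi_eq_sum_univ' a
    ext j
    · simp [Prod.fst_sum, Finset.sum_apply, Pi.single_apply]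
    · simp [Prod.snd_sum, Finset.sum_apply, Pi.single_apply]
  rw [h1, map_add, map_sum, map_sum]
  simp only [map_smul, smul_eq_mul, pdx, pdy, mul_comm]

lemma fderiv_vec_decomp {n : ℕ} (L : E n →L[ℝ] ℝ) (y : E n) :
    L y = ∑ k, L (Pi.single k 1) * y k := by
  conv_lhs => rw [pi_eq_sum_univ' y, map_sum]
  simp only [map_smul, smul_eq_mul, mul_comm]

/-- derivative of `x ↦ (Dφ(x) y)^l` in direction `e_s`. -/
lemma fderiv_apply_comp {n : ℕ} (φ : E n → E n) (x y v : E n)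
    (h : DifferentiableAt ℝ (fderiv ℝ φ) x) (l : Fin n) :
    fderiv ℝ (fun x' => fderiv ℝ φ x' y l) x v = fderiv ℝ (fderiv ℝ φ) x v y l := by
  have h1 : HasFDerivAt (fun x' => fderiv ℝ φ x' y)
      ((fderiv ℝ (fderiv ℝ φ) x).flip y) x := by
    simpa using h.hasFDerivAt.clm_apply (hasFDerivAt_const y x)
  have h2 := (hasFDerivAt_pi'.1 h1) l
  rw [h2.fderiv]
  rfl

lemma D2phi_eq {n : ℕ} (φ : E n → E n) (x : E n)
    (h : DifferentiableAt ℝ (fderiv ℝ φ) x) (s k l : Fin n) :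
    D2phi φ x s k l = fderiv ℝ (fderiv ℝ φ) x (Pi.single s 1) (Pi.single k 1) l :=
  fderiv_apply_comp φ x _ _ h l

lemma D2_sum {n : ℕ} (φ : E n → E n) (x y : E n)
    (h : DifferentiableAt ℝ (fderiv ℝ φ) x) (s l : Fin n) :
    fderiv ℝ (fderiv ℝ φ) x (Pi.single s 1) y l = ∑ k, D2phi φ x s k l * y k := by
  simp only [D2phi_eq φ x h]
  exact fderiv_vec_decomp
    ((ContinuousLinearMap.proj (R := ℝ) (φ := fun _ : Fin n => ℝ) l).comp
      (fderiv ℝ (fderiv ℝ φ) x (Pi.single s 1))) y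

lemma pdy_comm {n : ℕ} (G : E n × E n → ℝ) (p : E n × E n) (h : ContDiffAt ℝ (⊤ : ℕ∞) G p)
    (r l : Fin n) : pdy r (pdy l G) p = pdy l (pdy r G) p := by
  have hd : DifferentiableAt ℝ (fderiv ℝ G) p :=
    (h.fderiv_right (m := 1) one_add_one_le_smooth).differentiableAt (by simp)
  have key : ∀ r l : Fin n, pdy r (pdy l G) p
      = fderiv ℝ (fderiv ℝ G) p (0, Pi.single r 1) (0, Pi.single l 1) := by
    intro r l
    have h1 := hd.hasFDerivAt.clm_apply (hasFDerivAt_const ((0, Pi.single l 1) : E n × E n) p)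
    have h2 : pdy r (pdy l G) p = fderiv ℝ (fun q => fderiv ℝ G q (0, Pi.single l 1)) p
      (0, Pi.single r 1) := rfl
    rw [h2, h1.fderiv]
    simp
  rw [key, key]
  exact (h.isSymmSndFDerivAt (by simpa using two_le_smooth)).eq _ _

lemma D2phi_comm {n : ℕ} (φ : E n → E n) (x : E n) (hφ : ContDiff ℝ (⊤ : ℕ∞) φ)
    (s k l : Fin n) : D2phi φ x s k l = D2phi φ x k s l := by
  have hd : DifferentiableAt ℝ (fderiv ℝ φ) x :=
    (hφ.contDiffAt.fderiv_right (m := 1) one_add_one_le_smooth).differentiableAt (by simp)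
  rw [D2phi_eq φ x hd, D2phi_eq φ x hd]
  exact congrFun ((hφ.contDiffAt.isSymmSndFDerivAt (by simpa using two_le_smooth)).eq _ _) l

/-- The induced map on the tangent bundle. -/
def tmap {n : ℕ} (φ : E n → E n) (p : E n × E n) : E n × E n := (φ p.1, fderiv ℝ φ p.1 p.2)

lemma tmap_hasFDerivAt {n : ℕ} (φ : E n → E n) (hφ : ContDiff ℝ (⊤ : ℕ∞) φ) (p : E n × E n) :
    ∃ L : (E n × E n) →L[ℝ] (E n × E n), HasFDerivAt (tmap φ) L p ∧ ∀ a b, L (a, b) =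
      (fderiv ℝ φ p.1 a, fderiv ℝ φ p.1 b + fderiv ℝ (fderiv ℝ φ) p.1 a p.2) := by
  have hd : DifferentiableAt ℝ (fderiv ℝ φ) p.1 :=
    (hφ.contDiffAt.fderiv_right (m := 1) one_add_one_le_smooth).differentiableAt (by simp)
  have h1 : DifferentiableAt ℝ φ p.1 := hφ.contDiffAt.differentiableAt (by simp)
  have hA := h1.hasFDerivAt.comp p (hasFDerivAt_fst (𝕜 := ℝ) (E := E n) (F := E n) (p := p))
  have hB := (hd.hasFDerivAt.comp p
    (hasFDerivAt_fst (𝕜 := ℝ) (E := E n) (F := E n) (p := p))).clm_apply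
    (hasFDerivAt_snd (𝕜 := ℝ) (E := E n) (F := E n) (p := p))
  refine ⟨_, hA.prodMk hB, ?_⟩
  intro a b
  simp

lemma pdy_tmap {n : ℕ} (Fb : E n × E n → ℝ) (φ : E n → E n) (hφ : ContDiff ℝ (⊤ : ℕ∞) φ)
    (p : E n × E n) (h : DifferentiableAt ℝ Fb (tmap φ p)) (i : Fin n) :
    pdy i (fun q => Fb (tmap φ q)) p = ∑ l, pdy l Fb (tmap φ p) * Dphi φ p.1 i l := by
  obtain ⟨L, hL, hLa⟩ := tmap_hasFDerivAt φ hφ p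
  have := h.hasFDerivAt.comp p hL
  have h2 : pdy i (fun q => Fb (tmap φ q)) p = fderiv ℝ (Fb ∘ tmap φ) p (0, Pi.single i 1) := rfl
  rw [h2, this.fderiv, ContinuousLinearMap.comp_apply, hLa, fderiv_decomp]
  simp [Dphi]

lemma pdx_tmap {n : ℕ} (G : E n × E n → ℝ) (φ : E n → E n) (hφ : ContDiff ℝ (⊤ : ℕ∞) φ)
    (p : E n × E n) (h : DifferentiableAt ℝ G (tmap φ p)) (s : Fin n) :
    pdx s (fun q => G (tmap φ q)) p = ∑ m, pdx m G (tmap φ p) * Dphi φ p.1 s m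
      + ∑ r, pdy r G (tmap φ p) * ∑ k, D2phi φ p.1 s k r * p.2 k := by
  have hd : DifferentiableAt ℝ (fderiv ℝ φ) p.1 :=
    (hφ.contDiffAt.fderiv_right (m := 1) one_add_one_le_smooth).differentiableAt (by simp)
  obtain ⟨L, hL, hLa⟩ := tmap_hasFDerivAt φ hφ p
  have := h.hasFDerivAt.comp p hL
  have h2 : pdx s (fun q => G (tmap φ q)) p = fderiv ℝ (G ∘ tmap φ) p (Pi.single s 1, 0) := rfl
  rw [h2, this.fderiv, ContinuousLinearMap.comp_apply, hLa, fderiv_decomp]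
  simp only [map_zero, zero_add, Dphi, D2_sum φ p.1 p.2 hd]

lemma pdx_pdy_tmap {n : ℕ} (F Fb : E n × E n → ℝ) (φ : E n → E n) (hφ : ContDiff ℝ (⊤ : ℕ∞) φ)
    (hF : F = fun q => Fb (tmap φ q)) (p : E n × E n)
    (h : ∀ᶠ q in 𝓝 p, ContDiffAt ℝ (⊤ : ℕ∞) Fb (tmap φ q)) (s i : Fin n) :
    pdx s (pdy i F) p = ∑ l, ((∑ m, pdx m (pdy l Fb) (tmap φ p) * Dphi φ p.1 s m
      + ∑ r, pdy r (pdy l Fb) (tmap φ p) * ∑ k, D2phi φ p.1 s k r * p.2 k) * Dphi φ p.1 i l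
      + pdy l Fb (tmap φ p) * D2phi φ p.1 s i l) := by
  have hd : DifferentiableAt ℝ (fderiv ℝ φ) p.1 :=
    (hφ.contDiffAt.fderiv_right (m := 1) one_add_one_le_smooth).differentiableAt (by simp)
  have he : pdy i F =ᶠ[𝓝 p] fun q => ∑ l, pdy l Fb (tmap φ q) * Dphi φ q.1 i l := by
    filter_upwards [h] with q hq
    rw [hF]
    exact pdy_tmap Fb φ hφ q (hq.differentiableAt (by simp)) i
  have hG : ∀ l, DifferentiableAt ℝ (pdy l Fb) (tmap φ p) := fun l =>
    ((h.self_of_nhds.fderiv_right (m := 1) one_add_one_le_smooth).differentiableAt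
      (by simp)).clm_apply (differentiableAt_const _)
  obtain ⟨L, hL, -⟩ := tmap_hasFDerivAt φ hφ p
  have hGt : ∀ l, DifferentiableAt ℝ (fun q => pdy l Fb (tmap φ q)) p := fun l =>
    (hG l).comp p hL.differentiableAt
  have hDx : ∀ l, DifferentiableAt ℝ (fun x => Dphi φ x i l) p.1 := fun l =>
    differentiableAt_pi.1 (hd.clm_apply (differentiableAt_const (Pi.single i 1 : E n))) l
  have hD : ∀ l, HasFDerivAt (fun q : E n × E n => Dphi φ q.1 i l)
      ((fderiv ℝ (fun x => Dphi φ x i l) p.1).comp (ContinuousLinearMap.fst ℝ (E n) (E n))) p :=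
    fun l => (hDx l).hasFDerivAt.comp p hasFDerivAt_fst
  have hS := HasFDerivAt.fun_sum (u := Finset.univ)
    (fun l _ => (hGt l).hasFDerivAt.fun_mul (hD l))
  have h3 : pdx s (pdy i F) p = fderiv ℝ (pdy i F) p (Pi.single s 1, 0) := rfl
  rw [h3, he.fderiv_eq, hS.fderiv, ContinuousLinearMap.sum_apply]
  refine Finset.sum_congr rfl fun l _ => ?_
  rw [← pdx_tmap (pdy l Fb) φ hφ p (hG l) s]
  simp only [ContinuousLinearMap.add_apply, ContinuousLinearMap.smul_apply, smul_eq_mul,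
    ContinuousLinearMap.comp_apply, ContinuousLinearMap.coe_fst']
  simp only [pdx, D2phi, Dphi]
  ring

lemma sum_identity {n : ℕ} (A B : Fin n → Fin n → ℝ) (P : Fin n → ℝ) (J : Fin n → Fin n → ℝ)
    (H : Fin n → Fin n → Fin n → ℝ) (y : Fin n → ℝ) (i : Fin n)
    (hB : ∀ r l, B r l = B l r) (hH : ∀ s k l, H s k l = H k s l) :
    (∑ s, (∑ l, ((∑ m, A m l * J s m + ∑ r, B r l * ∑ k, H s k r * y k) * J i l
        + P l * H s i l)) * y s)
    - (∑ s, (∑ l, ((∑ m, A m l * J i m + ∑ r, B r l * ∑ k, H i k r * y k) * J s l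
        + P l * H i s l)) * y s)
    = (∑ s, ∑ l, ∑ m, (A m l - A l m) * (J s m * J i l) * y s)
      + ∑ s, ∑ k, ∑ l, ∑ r, B r l * (H s k l * J i r - H i k l * J s r) * (y s * y k) := by
  rw [← Finset.sum_sub_distrib, ← Finset.sum_add_distrib]
  refine Finset.sum_congr rfl fun s _ => ?_
  have e1 : ∑ l, ∑ m, (A m l - A l m) * (J s m * J i l) * y s
      = (∑ l, ∑ m, A m l * J s m * J i l * y s) - ∑ l, ∑ m, A m l * J i m * J s l * y s := by
    rw [Finset.sum_comm (f := fun l m => A m l * J i m * J s l * y s)]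
    simp only [← Finset.sum_sub_distrib]
    refine Finset.sum_congr rfl fun l _ => Finset.sum_congr rfl fun m _ => ?_
    ring
  have e2 : ∀ (T : Fin n → Fin n → ℝ) (K : Fin n → ℝ),
      ∑ k, ∑ l, ∑ r, B r l * (T k l * K r) * (y s * y k)
      = (∑ l, (∑ r, B r l * ∑ k, T k r * y k) * K l) * y s := by
    intro T K
    simp only [Finset.mul_sum, Finset.sum_mul]
    rw [Finset.sum_comm]
    simp only [Finset.sum_comm (s := Finset.univ) (t := Finset.univ)
      (f := fun k r => B r _ * (T k _ * K r) * (y s * y k))]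
    rw [Finset.sum_comm]
    refine Finset.sum_congr rfl fun l _ => Finset.sum_congr rfl fun r _ =>
      Finset.sum_congr rfl fun k _ => ?_
    rw [hB l r]
    ring
  have e3 : ∑ k, ∑ l, ∑ r, B r l * (H s k l * J i r - H i k l * J s r) * (y s * y k)
      = ∑ k, ∑ l, ∑ r, B r l * (H s k l * J i r) * (y s * y k)
        - ∑ k, ∑ l, ∑ r, B r l * (H i k l * J s r) * (y s * y k) := by
    simp only [← Finset.sum_sub_distrib, mul_sub, sub_mul]
  rw [e1, e3, e2 (H s) (J i), e2 (H i) (J s)]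
  simp only [Finset.sum_add_distrib, add_mul]
  have e4 : ∀ l, H i s l = H s i l := fun l => hH i s l
  simp only [e4, Finset.sum_mul]
  ring

/-- the coordinate-change identity for the Hamel defect. -/
theorem statement5 {n : ℕ} (F : E n × E n → ℝ)
    (hFsmooth : ContDiffOn ℝ (⊤ : ℕ∞) F {p : E n × E n | p.2 ≠ 0})
    (hFhomog : ∀ (x y : E n) (c : ℝ), 0 < c → F (x, c • y) = c * F (x, y))
    (φ ψ : E n → E n)
    (hφ : ContDiff ℝ (⊤ : ℕ∞) φ) (hopen : IsOpen (Set.range φ))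
    (hψ : ContDiffOn ℝ (⊤ : ℕ∞) ψ (Set.range φ)) (hinv : ∀ x : E n, ψ (φ x) = x)
    (Fb : E n × E n → ℝ)
    (hFb : ∀ (x y : E n), Fb (φ x, fderiv ℝ φ x y) = F (x, y))
    (hFbsmooth : ContDiffOn ℝ (⊤ : ℕ∞) Fb {p : E n × E n | p.1 ∈ Set.range φ ∧ p.2 ≠ 0}) :
    ∀ (x y : E n), y ≠ 0 → ∀ i : Fin n,
      (∑ s, pdx s (pdy i F) (x, y) * y s) - (∑ s, pdx i (pdy s F) (x, y) * y s) =
      (∑ s, ∑ l, ∑ m,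
        (pdx m (pdy l Fb) (φ x, fderiv ℝ φ x y) - pdx l (pdy m Fb) (φ x, fderiv ℝ φ x y)) *
          (Dphi φ x s m * Dphi φ x i l) * y s) +
      (∑ s, ∑ k, ∑ l, ∑ r,
        pdy r (pdy l Fb) (φ x, fderiv ℝ φ x y) *
          (D2phi φ x s k l * Dphi φ x i r - D2phi φ x i k l * Dphi φ x s r) *
          (y s * y k)) := by
  intro x y hy i
  have hinj : ∀ x v : E n, v ≠ 0 → fderiv ℝ φ x v ≠ 0 := by
    intro x v hv h0
    have h1 : DifferentiableAt ℝ φ x := hφ.contDiffAt.differentiableAt (by simp)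
    have h2 : DifferentiableAt ℝ ψ (φ x) :=
      (hψ.contDiffAt (hopen.mem_nhds ⟨x, rfl⟩)).differentiableAt (by simp)
    have h3 := h2.hasFDerivAt.comp x h1.hasFDerivAt
    have h4 : ψ ∘ φ = id := funext hinv
    rw [h4] at h3
    have h5 := congrArg (fun L => L v) (h3.unique (hasFDerivAt_id x))
    simp [h0] at h5
    exact hv h5.symm
  have hFeq : F = fun q => Fb (tmap φ q) := funext fun q => (hFb q.1 q.2).symm
  have hO : IsOpen {p : E n × E n | p.1 ∈ Set.range φ ∧ p.2 ≠ 0} :=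
    (hopen.preimage continuous_fst).inter (isOpen_ne.preimage continuous_snd)
  have hC : ∀ q : E n × E n, q.2 ≠ 0 → ContDiffAt ℝ (⊤ : ℕ∞) Fb (tmap φ q) := fun q hq =>
    hFbsmooth.contDiffAt (hO.mem_nhds ⟨⟨q.1, rfl⟩, hinj q.1 q.2 hq⟩)
  have hev : ∀ᶠ q in 𝓝 ((x, y) : E n × E n), ContDiffAt ℝ (⊤ : ℕ∞) Fb (tmap φ q) := by
    have : ∀ᶠ q in 𝓝 ((x, y) : E n × E n), q.2 ≠ 0 :=
      (isOpen_ne.preimage continuous_snd).mem_nhds hy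
    filter_upwards [this] with q hq using hC q hq
  simp only [pdx_pdy_tmap F Fb φ hφ hFeq (x, y) hev]
  exact sum_identity (fun m l => pdx m (pdy l Fb) (tmap φ (x, y)))
    (fun r l => pdy r (pdy l Fb) (tmap φ (x, y))) (fun l => pdy l Fb (tmap φ (x, y)))
    (Dphi φ x) (D2phi φ x) y i (fun r l => pdy_comm Fb _ (hC (x, y) hy) r l)
    (fun s k l => D2phi_comm φ x hφ s k l)
end
end
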